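/- arXiv:1106.5190 — 3 statements merged into one kernel-verified Lean document; each statement's English description precedes it below -/
import Mathlib

section
/- Let k be a field of characteristic p > 0, n ≥ 1, and R a subalgebra of the polynomial ring k[X] = k[x₁,…,xₙ]. If J(R) = k[X] (i.e. the Jacobian ideal is the whole ring), then R[X^p] = k[X]. -/
open MvPolynomial

/-- The Jacobian of an `n`-tuple of polynomials in `n` variables. -/
noncomputable def jac {k : Type*} [CommRing k] {n : ℕ}
    (F : Fin n → MvPolynomial (Fin n) k) : MvPolynomial (Fin n) k :=
  (Matrix.of fun i j : Fin n => pderiv j (F i)).det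

/-- The Jacobian ideal of a subalgebra `R` of `k[X]`: the ideal generated by all
Jacobians of `n`-tuples of elements of `R`. -/
noncomputable def jacIdeal {k : Type*} [CommRing k] {n : ℕ}
    (R : Subalgebra k (MvPolynomial (Fin n) k)) : Ideal (MvPolynomial (Fin n) k) :=
  Ideal.span {g | ∃ F : Fin n → MvPolynomial (Fin n) k, (∀ i, F i ∈ R) ∧ g = jac F}

/-- `R[X^p]`: the subalgebra of `k[X]` generated by `R` together with `x₁^p, …, xₙ^p`. -/
noncomputable def RXp {k : Type*} [CommRing k] {n : ℕ} (p : ℕ)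
    (R : Subalgebra k (MvPolynomial (Fin n) k)) : Subalgebra k (MvPolynomial (Fin n) k) :=
  Algebra.adjoin k ((R : Set (MvPolynomial (Fin n) k)) ∪
    Set.range fun i : Fin n => (X i : MvPolynomial (Fin n) k) ^ p)

/- If `J(R) = k[X]`, then by Cramer's rule every derivation of `k[X]` that vanishes on `R` kills the
variables, so `k[X]` is unramified over `R` and a fortiori over `B = R[X^q]`, where `q = p ^ e`.
Hence some `t ∈ A ⊗[B] A` with `A = k[X]` is annihilated by all `1 ⊗ a - a ⊗ 1` and is sent to `1`
by multiplication. Since `a ^ q ∈ B` for all `a`, the kernel of multiplication is nil, so `t` is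
a unit and `1 ⊗ a = a ⊗ 1`: the inclusion `B → A` is a finite epimorphism, that is, surjective. -/

open scoped TensorProduct

section Derivation

variable {k σ M : Type*} [CommRing k] [AddCommGroup M]

theorem det_smul_eq_zero_of_sum_smul_eq_zero [Fintype σ] [DecidableEq σ] [Module k M]
    (A : Matrix σ σ k) (v : σ → M) (h : ∀ i, ∑ j, A i j • v j = 0) (i : σ) : A.det • v i = 0 :=
  calc A.det • v i = ∑ j, (A.adjugate * A) i j • v j := by
        simp [Matrix.adjugate_mul, Matrix.one_apply, ite_smul]
    _ = ∑ l, A.adjugate i l • ∑ j, A l j • v j := by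
        simp only [Matrix.mul_apply, Finset.sum_smul, Finset.smul_sum, mul_smul]
        exact Finset.sum_comm
    _ = 0 := by simp [h]

variable [Module k M] [Module (MvPolynomial σ k) M]

theorem derivation_eq_sum_pderiv_smul [Fintype σ] (D : Derivation k (MvPolynomial σ k) M)
    (f : MvPolynomial σ k) : D f = ∑ i, pderiv i f • D (X i) := by
  classical
  induction f using MvPolynomial.induction_on with
  | C a => simp
  | add f g hf hg => simp [hf, hg, add_smul, Finset.sum_add_distrib]
  | mul_X f i hf =>
    simp [hf, pderiv_X, Pi.single_apply, add_smul, mul_smul, ite_smul, Finset.sum_add_distrib,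
      Finset.smul_sum]

end Derivation

section Jacobian

variable {k M : Type*} [CommRing k] [AddCommGroup M] [Module k M] {n : ℕ}
  [Module (MvPolynomial (Fin n) k) M]

theorem jac_smul_derivation_X_eq_zero (D : Derivation k (MvPolynomial (Fin n) k) M)
    {F : Fin n → MvPolynomial (Fin n) k} (hF : ∀ i, D (F i) = 0) (i : Fin n) :
    jac F • D (X i) = 0 :=
  det_smul_eq_zero_of_sum_smul_eq_zero _ (fun j ↦ D (X j))
    (fun l ↦ (derivation_eq_sum_pderiv_smul D (F l)).symm.trans (hF l)) i

theorem derivation_eq_zero_of_jacIdeal_eq_top {R : Subalgebra k (MvPolynomial (Fin n) k)}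
    (hR : jacIdeal R = ⊤) {D : Derivation k (MvPolynomial (Fin n) k) M}
    (hD : ∀ f ∈ R, D f = 0) : D = 0 := by
  refine derivation_ext fun i ↦ ?_
  have hle : jacIdeal R ≤ Ideal.torsionOf _ M (D (X i)) := by
    refine Ideal.span_le.2 ?_
    rintro _ ⟨F, hF, rfl⟩
    exact jac_smul_derivation_X_eq_zero D (fun j ↦ hD _ (hF j)) i
  exact (Ideal.torsionOf_eq_top_iff _ _).1 (top_le_iff.1 (hR ▸ hle))

theorem formallyUnramified_of_jacIdeal_eq_top {R : Subalgebra k (MvPolynomial (Fin n) k)}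
    (hR : jacIdeal R = ⊤) : Algebra.FormallyUnramified R (MvPolynomial (Fin n) k) := by
  let D := KaehlerDifferential.D R (MvPolynomial (Fin n) k)
  have hD : D.restrictScalars k = 0 :=
    derivation_eq_zero_of_jacIdeal_eq_top hR fun f hf ↦ D.map_algebraMap ⟨f, hf⟩
  rw [Algebra.formallyUnramified_iff, ← Submodule.subsingleton_iff (MvPolynomial (Fin n) k),
    ← subsingleton_iff_bot_eq_top, ← KaehlerDifferential.span_range_derivation, eq_comm,
    Submodule.span_eq_bot]
  rintro _ ⟨f, rfl⟩
  exact DFunLike.congr_fun hD f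

theorem jacIdeal_mono {R S : Subalgebra k (MvPolynomial (Fin n) k)} (h : R ≤ S) :
    jacIdeal R ≤ jacIdeal S :=
  Ideal.span_mono fun _ ⟨F, hF, hg⟩ ↦ ⟨F, fun i ↦ h (hF i), hg⟩

end Jacobian

section RadicialExtension

variable {B A : Type*} [CommRing B] [CommRing A] [Algebra B A] {p : ℕ} [ExpChar A p]

theorem isNilpotent_one_tmul_sub_tmul_one {a : A} {e : ℕ}
    (ha : a ^ p ^ e ∈ (algebraMap B A).range) :
    IsNilpotent ((1 : A) ⊗ₜ[B] a - a ⊗ₜ[B] (1 : A)) := by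
  have : ExpChar (A ⊗[B] A) p := expChar_of_injective_ringHom
    (f := (Algebra.TensorProduct.includeLeft : A →ₐ[B] A ⊗[B] A).toRingHom)
    (Function.LeftInverse.injective (g := Algebra.TensorProduct.lmul' B) fun a ↦ by simp) p
  obtain ⟨b, hb⟩ := ha
  refine ⟨p ^ e, ?_⟩
  rw [sub_pow_expChar_pow, Algebra.TensorProduct.tmul_pow, Algebra.TensorProduct.tmul_pow, one_pow,
    ← hb, Algebra.algebraMap_eq_smul_one, TensorProduct.smul_tmul, sub_self]

theorem isNilpotent_of_lmul'_eq_zero (h : ∀ a : A, ∃ e : ℕ, a ^ p ^ e ∈ (algebraMap B A).range)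
    {t : A ⊗[B] A} (ht : Algebra.TensorProduct.lmul' B t = 0) : IsNilpotent t := by
  have hle : KaehlerDifferential.ideal B A ≤ nilradical (A ⊗[B] A) := by
    rw [← KaehlerDifferential.span_range_eq_ideal, Ideal.span_le]
    rintro _ ⟨a, rfl⟩
    obtain ⟨e, he⟩ := h a
    exact isNilpotent_one_tmul_sub_tmul_one he
  exact hle ht

theorem isEpi_of_formallyUnramified_of_pow_mem_range [Algebra.EssFiniteType B A]
    [Algebra.FormallyUnramified B A]
    (h : ∀ a : A, ∃ e : ℕ, a ^ p ^ e ∈ (algebraMap B A).range) : Algebra.IsEpi B A := by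
  obtain ⟨t, ht, ht_one⟩ :=
    Algebra.FormallyUnramified.iff_exists_tensorProduct.1 ‹_›
  have ht_unit : IsUnit t := by
    have h_nil : IsNilpotent (1 - t) := isNilpotent_of_lmul'_eq_zero h (by simp [ht_one])
    simpa using h_nil.isUnit_one_sub
  exact (Algebra.isEpi_iff_forall_one_tmul_eq B A).2 fun a ↦
    sub_eq_zero.1 (ht_unit.mul_left_eq_zero.1 (ht a))

theorem isIntegral_of_pow_mem_range
    (h : ∀ a : A, ∃ e : ℕ, a ^ p ^ e ∈ (algebraMap B A).range) : Algebra.IsIntegral B A where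
  isIntegral a := by
    obtain ⟨e, b, hb⟩ := h a
    exact .of_pow (pow_pos (expChar_pos A p) e) (hb ▸ isIntegral_algebraMap)

theorem algebraMap_surjective_of_formallyUnramified_of_pow_mem_range [Algebra.FiniteType B A]
    [Algebra.FormallyUnramified B A]
    (h : ∀ a : A, ∃ e : ℕ, a ^ p ^ e ∈ (algebraMap B A).range) :
    Function.Surjective (algebraMap B A) := by
  have := isIntegral_of_pow_mem_range h
  have : Module.Finite B A := Algebra.IsIntegral.finite
  exact Algebra.isEpi_iff_surjective_algebraMap_of_finite.1
    (isEpi_of_formallyUnramified_of_pow_mem_range h)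

end RadicialExtension

theorem pow_expChar_pow_mem_of_X_pow_mem {k σ : Type*} [CommRing k] {p : ℕ} [ExpChar k p] {e : ℕ}
    {S : Subalgebra k (MvPolynomial σ k)} (hS : ∀ i, X i ^ p ^ e ∈ S) (f : MvPolynomial σ k) :
    f ^ p ^ e ∈ S := by
  induction f using MvPolynomial.induction_on with
  | C a => exact pow_mem (S.algebraMap_mem a) _
  | add f g hf hg => simpa only [add_pow_expChar_pow] using add_mem hf hg
  | mul_X f i hf => simpa only [mul_pow] using mul_mem hf (hS i)

theorem stmt1_general {k : Type*} [CommRing k] (p : ℕ) [ExpChar k p] (e : ℕ) {n : ℕ}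
    {R : Subalgebra k (MvPolynomial (Fin n) k)} (hR : jacIdeal R = ⊤) : RXp (p ^ e) R = ⊤ := by
  have h_le : R ≤ RXp (p ^ e) R := fun f hf ↦ Algebra.subset_adjoin (.inl hf)
  have h_pow : ∀ f, f ^ p ^ e ∈ RXp (p ^ e) R :=
    pow_expChar_pow_mem_of_X_pow_mem fun i ↦ Algebra.subset_adjoin (.inr ⟨i, rfl⟩)
  have := formallyUnramified_of_jacIdeal_eq_top (top_le_iff.1 (hR ▸ jacIdeal_mono h_le))
  have : Algebra.FiniteType (RXp (p ^ e) R) (MvPolynomial (Fin n) k) :=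
    .of_restrictScalars_finiteType k _ _
  have h_surj : Function.Surjective (algebraMap (RXp (p ^ e) R) (MvPolynomial (Fin n) k)) :=
    algebraMap_surjective_of_formallyUnramified_of_pow_mem_range (p := p)
      fun f ↦ ⟨e, ⟨f ^ p ^ e, h_pow f⟩, rfl⟩
  exact (RXp (p ^ e) R).range_val ▸ (AlgHom.range_eq_top _).2 h_surj

theorem stmt1 {k : Type*} [Field k] (p : ℕ) (hp : p.Prime) [CharP k p]
    (n : ℕ) (hn : 1 ≤ n) (R : Subalgebra k (MvPolynomial (Fin n) k))
    (htop : jacIdeal R = ⊤) :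
    RXp p R = ⊤ := by
  have : ExpChar k p := .prime hp
  simpa only [pow_one] using stmt1_general p 1 htop
end

section
/- Let k be a field of characteristic p > 0 and A an n × n matrix over k. If F = AX, i.e. Fᵢ = Σⱼ A_{ij} xⱼ for 1 ≤ i ≤ n, then Δ(F) = (det A)^q, where q = p^n(p−1)/2. -/
open MvPolynomial

/-!
`Δ` is multiplicative along composition: `U(F ∘ G)` is the product of `U(F)`, with `G` substituted
in its entries, and `U(G)`; the substitution preserves `k[X^p]` because `p`-th powers lie there.
An invertible matrix `A` therefore has a unit of `k[X]`, i.e. a nonzero constant, as `Δ(AX)`.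
A transvection `E` satisfies `E^p = 1`, so `Δ(EX)^p = 1` and `Δ(EX) = 1` in characteristic `p`.
For a diagonal matrix `U(AX)` is itself diagonal and `Δ(AX)` can be read off. Every matrix over a
field is a product of transvections and a diagonal matrix.
-/

section MultiPow

variable {σ M : Type*} [Fintype σ] [CommMonoid M] {p : ℕ}

/-- The power `F^α = ∏ᵢ Fᵢ^{αᵢ}` of a family, for a multiindex `α` with entries in `[0, p - 1]`. -/
def multiPow (F : σ → M) (α : σ → Fin p) : M := ∏ i, F i ^ (α i : ℕ)

lemma map_multiPow {N Φ : Type*} [CommMonoid N] [FunLike Φ M N] [MonoidHomClass Φ M N] (f : Φ)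
    (F : σ → M) (α : σ → Fin p) : f (multiPow F α) = multiPow (fun i ↦ f (F i)) α := by
  simp only [multiPow, map_prod, map_pow]

lemma multiPow_mul (F G : σ → M) (α : σ → Fin p) :
    multiPow (fun i ↦ F i * G i) α = multiPow F α * multiPow G α := by
  simp only [multiPow, mul_pow, Finset.prod_mul_distrib]

lemma sum_multiindex_apply [DecidableEq σ] (p : ℕ) (i : σ) :
    ∑ α : σ → Fin p, (α i : ℕ) = p ^ Fintype.card σ * (p - 1) / 2 := by
  have hcard : Fintype.card σ - 1 + 1 = Fintype.card σ :=
    Nat.succ_pred_eq_of_pos (Fintype.card_pos_iff.mpr ⟨i⟩)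
  have hsum : ∑ b : Fin p, (b : ℕ) = p * (p - 1) / 2 := by
    rw [Fin.sum_univ_eq_sum_range (fun b ↦ b), Finset.sum_range_id]
  calc ∑ α : σ → Fin p, (α i : ℕ)
      = p ^ (Fintype.card σ - 1) * (p * (p - 1) / 2) := by
        simpa [hsum] using Fintype.sum_piFinset_apply (fun b : Fin p ↦ (b : ℕ)) Finset.univ i
    _ = p ^ Fintype.card σ * (p - 1) / 2 := by
        rw [← Nat.mul_div_assoc _ (Nat.even_mul_pred_self p).two_dvd, ← mul_assoc, ← pow_succ,
          hcard]

lemma prod_multiPow [DecidableEq σ] (p : ℕ) (D : σ → M) :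
    ∏ α : σ → Fin p, multiPow D α = (∏ i, D i) ^ (p ^ Fintype.card σ * (p - 1) / 2) := by
  simp only [multiPow]
  rw [Finset.prod_comm, ← Finset.prod_pow]
  exact Finset.prod_congr rfl fun i _ ↦ by rw [Finset.prod_pow_eq_pow_sum, sum_multiindex_apply]

end MultiPow

section PthPowerSubalgebra

variable {σ τ R : Type*} [CommSemiring R] {p : ℕ}

/-- The subalgebra `R[X^p]` of `R[X]` generated by the `p`-th powers of the variables. -/
noncomputable def pthPowerSubalgebra (σ R : Type*) [CommSemiring R] (p : ℕ) :
    Subalgebra R (MvPolynomial σ R) :=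
  Algebra.adjoin R (Set.range fun i : σ ↦ (X i : MvPolynomial σ R) ^ p)

lemma pthPowerSubalgebra_eq_range_expand :
    pthPowerSubalgebra σ R p = (expand p : MvPolynomial σ R →ₐ[R] MvPolynomial σ R).range :=
  Algebra.adjoin_range_eq_range_aeval R _

lemma X_pow_mem_pthPowerSubalgebra (i : σ) :
    (X i : MvPolynomial σ R) ^ p ∈ pthPowerSubalgebra σ R p :=
  Algebra.subset_adjoin (Set.mem_range_self i)

lemma pow_mem_pthPowerSubalgebra [Fact p.Prime] [CharP R p] (f : MvPolynomial σ R) :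
    f ^ p ∈ pthPowerSubalgebra σ R p := by
  rw [pthPowerSubalgebra_eq_range_expand, ← map_frobenius_expand, map_expand]
  exact AlgHom.mem_range_self _ _

lemma bind₁_mem_pthPowerSubalgebra [Fact p.Prime] [CharP R p] (G : τ → MvPolynomial σ R)
    {f : MvPolynomial τ R} (hf : f ∈ pthPowerSubalgebra τ R p) :
    bind₁ G f ∈ pthPowerSubalgebra σ R p := by
  suffices pthPowerSubalgebra τ R p ≤ (pthPowerSubalgebra σ R p).comap (bind₁ G) from this hf
  rw [pthPowerSubalgebra, Algebra.adjoin_le_iff]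
  rintro _ ⟨i, rfl⟩
  simpa using pow_mem_pthPowerSubalgebra (G i)

/-- The restriction to the subalgebras of `p`-th powers of the substitution `f ↦ f ∘ G`. -/
noncomputable def pthPowerBind (p : ℕ) [Fact p.Prime] [CharP R p] (G : τ → MvPolynomial σ R) :
    pthPowerSubalgebra τ R p →ₐ[R] pthPowerSubalgebra σ R p :=
  ((bind₁ G).comp (pthPowerSubalgebra τ R p).val).codRestrict _
    fun f ↦ bind₁_mem_pthPowerSubalgebra G f.2

lemma coe_pthPowerBind [Fact p.Prime] [CharP R p] (G : τ → MvPolynomial σ R)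
    (f : pthPowerSubalgebra τ R p) : (pthPowerBind p G f : MvPolynomial σ R) = bind₁ G f :=
  rfl

end PthPowerSubalgebra

section Basis

variable {σ R : Type*} [Fintype σ] [CommSemiring R] {p : ℕ}

lemma multiPow_X_eq_monomial (β : σ → Fin p) :
    (multiPow X β : MvPolynomial σ R)
      = monomial (Finsupp.equivFunOnFinite.symm fun i ↦ (β i : ℕ)) 1 := by
  rw [monomial_eq, Finsupp.prod_fintype _ _ (by simp)]
  simp [multiPow]

lemma coeff_expand_mul_multiPow_X_self (hp : p ≠ 0) (g : MvPolynomial σ R) (β : σ → Fin p)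
    (d : σ →₀ ℕ) :
    coeff (p • d + Finsupp.equivFunOnFinite.symm fun i ↦ (β i : ℕ)) (expand p g * multiPow X β)
      = coeff d g := by
  rw [multiPow_X_eq_monomial, coeff_mul_monomial, coeff_expand_smul p hp, mul_one]

lemma coeff_expand_mul_multiPow_X_of_ne (g : MvPolynomial σ R) {β γ : σ → Fin p} (h : β ≠ γ)
    (d : σ →₀ ℕ) :
    coeff (p • d + Finsupp.equivFunOnFinite.symm fun i ↦ (γ i : ℕ)) (expand p g * multiPow X β)
      = 0 := by
  rw [multiPow_X_eq_monomial, coeff_mul_monomial']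
  split_ifs with hle
  · obtain ⟨i, hi⟩ := Function.ne_iff.mp h
    rw [coeff_expand_of_not_dvd (i := i), zero_mul]
    intro hdvd
    have hmod : (β i : ℕ) ≡ p * d i + γ i [MOD p] :=
      (Nat.modEq_iff_dvd' (by simpa using hle i)).2 (by simpa using hdvd)
    refine hi (Fin.ext (Nat.ModEq.eq_of_lt_of_lt ?_ (β i).2 (γ i).2))
    simpa [Nat.ModEq] using hmod
  · rfl

lemma coeff_sum_expand_mul_multiPow_X [DecidableEq σ] (hp : p ≠ 0)
    (g : (σ → Fin p) → MvPolynomial σ R) (γ : σ → Fin p) (d : σ →₀ ℕ) :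
    coeff (p • d + Finsupp.equivFunOnFinite.symm fun i ↦ (γ i : ℕ))
      (∑ β, expand p (g β) * multiPow X β) = coeff d (g γ) := by
  rw [coeff_sum, Finset.sum_eq_single γ
    (fun β _ h ↦ coeff_expand_mul_multiPow_X_of_ne (g β) h d) (by simp),
    coeff_expand_mul_multiPow_X_self hp]

lemma linearIndependent_multiPow_X (hp : p ≠ 0) :
    LinearIndependent (pthPowerSubalgebra σ R p)
      (multiPow X : (σ → Fin p) → MvPolynomial σ R) := by
  classical
  refine Fintype.linearIndependent_iffₛ.mpr fun f g hfg γ ↦ ?_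
  have hexpand (h : pthPowerSubalgebra σ R p) : ∃ q, expand p q = (h : MvPolynomial σ R) :=
    pthPowerSubalgebra_eq_range_expand.le h.2
  choose f' hf' using fun β ↦ hexpand (f β)
  choose g' hg' using fun β ↦ hexpand (g β)
  suffices f' γ = g' γ from Subtype.ext (by rw [← hf', ← hg', this])
  ext d
  simp only [Subalgebra.smul_def, smul_eq_mul, ← hf', ← hg'] at hfg
  rw [← coeff_sum_expand_mul_multiPow_X hp f' γ d, hfg, coeff_sum_expand_mul_multiPow_X hp]

lemma span_range_multiPow_X [NeZero p] :
    Submodule.span (pthPowerSubalgebra σ R p)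
      (Set.range (multiPow X : (σ → Fin p) → MvPolynomial σ R)) = ⊤ := by
  refine Submodule.eq_top_iff'.mpr fun f ↦ ?_
  induction f using MvPolynomial.induction_on' with
  | add f g hf hg => exact add_mem hf hg
  | monomial d r =>
    let quotient : MvPolynomial σ R := C r * ∏ i, (X i ^ p) ^ (d i / p)
    have hquotient : quotient ∈ pthPowerSubalgebra σ R p :=
      mul_mem (Subalgebra.algebraMap_mem _ r)
        (prod_mem fun i _ ↦ pow_mem (X_pow_mem_pthPowerSubalgebra i) _)
    have hdiv : monomial d r = quotient * multiPow X fun i ↦ Fin.ofNat p (d i) := by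
      rw [monomial_eq, Finsupp.prod_fintype _ _ (by simp), mul_assoc, multiPow,
        ← Finset.prod_mul_distrib]
      simp [← pow_mul, ← pow_add, Nat.div_add_mod]
    rw [hdiv]
    exact Submodule.smul_mem _ (⟨quotient, hquotient⟩ : pthPowerSubalgebra σ R p)
      (Submodule.subset_span (Set.mem_range_self _))

/-- The basis `{X^β : β ∈ [0, p - 1]^σ}` of `R[X]` over `R[X^p]`. -/
noncomputable def multiPowBasis (σ R : Type*) [Fintype σ] [CommSemiring R] (p : ℕ) [NeZero p] :
    Module.Basis (σ → Fin p) (pthPowerSubalgebra σ R p) (MvPolynomial σ R) :=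
  .mk (linearIndependent_multiPow_X (NeZero.ne p)) span_range_multiPow_X.ge

lemma multiPowBasis_apply [NeZero p] (β : σ → Fin p) : multiPowBasis σ R p β = multiPow X β :=
  Module.Basis.mk_apply _ _ β

end Basis

section CoeffMatrix

variable {ι σ τ R : Type*} [Fintype ι] [Fintype σ] [Fintype τ] [CommSemiring R] {p : ℕ}

/-- The matrix `U(F)`, whose row `α` lists the coordinates of `F^α` in the basis `X^β` of `R[X]`
over `R[X^p]`. -/
noncomputable def coeffMatrix (p : ℕ) [NeZero p] (F : ι → MvPolynomial σ R) :
    Matrix (ι → Fin p) (σ → Fin p) (pthPowerSubalgebra σ R p) :=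
  .of fun α β ↦ (multiPowBasis σ R p).repr (multiPow F α) β

lemma sum_coeffMatrix_smul [DecidableEq σ] [NeZero p] (F : ι → MvPolynomial σ R) (α : ι → Fin p) :
    ∑ β, coeffMatrix p F α β • multiPow X β = multiPow F α := by
  simpa only [multiPowBasis_apply, coeffMatrix, Matrix.of_apply] using
    (multiPowBasis σ R p).sum_repr (multiPow F α)

lemma coeffMatrix_eq_of_sum_smul [DecidableEq σ] [NeZero p] {F : ι → MvPolynomial σ R}
    {U : Matrix (ι → Fin p) (σ → Fin p) (pthPowerSubalgebra σ R p)}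
    (hU : ∀ α, ∑ β, U α β • multiPow X β = multiPow F α) : coeffMatrix p F = U := by
  ext1 α β
  simp only [coeffMatrix, Matrix.of_apply, ← hU, ← multiPowBasis_apply]
  exact congrFun ((multiPowBasis σ R p).repr_sum_self (U α)) β

lemma coeffMatrix_bind₁ [DecidableEq τ] [Fact p.Prime] [CharP R p]
    (F : ι → MvPolynomial τ R) (G : τ → MvPolynomial σ R) :
    coeffMatrix p (fun i ↦ bind₁ G (F i))
      = (coeffMatrix p F).map (pthPowerBind p G) * coeffMatrix p G := by
  classical
  refine coeffMatrix_eq_of_sum_smul fun α ↦ ?_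
  calc ∑ β, ((coeffMatrix p F).map (pthPowerBind p G) * coeffMatrix p G) α β • multiPow X β
      = ∑ γ, pthPowerBind p G (coeffMatrix p F α γ) •
          ∑ β, coeffMatrix p G γ β • multiPow X β := by
        simp only [Matrix.mul_apply, Matrix.map_apply, Finset.sum_smul, Finset.smul_sum, mul_smul]
        exact Finset.sum_comm
    _ = ∑ γ, bind₁ G (coeffMatrix p F α γ • multiPow X γ) := by
        simp only [sum_coeffMatrix_smul]
        simp only [Subalgebra.smul_def, smul_eq_mul, map_mul, map_multiPow, bind₁_X_right,
          coe_pthPowerBind]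
    _ = multiPow (fun i ↦ bind₁ G (F i)) α := by
        rw [← map_sum, sum_coeffMatrix_smul, map_multiPow]

end CoeffMatrix

section CoeffDet

variable {σ R : Type*} [Fintype σ] [DecidableEq σ] [CommRing R] {p : ℕ}

/-- The determinant `Δ(F)` of `U(F)`. -/
noncomputable def coeffDet (p : ℕ) [NeZero p] (F : σ → MvPolynomial σ R) :
    pthPowerSubalgebra σ R p :=
  (coeffMatrix p F).det

lemma coeffDet_X [NeZero p] : coeffDet p (X : σ → MvPolynomial σ R) = 1 := by
  have hone : coeffMatrix p (X : σ → MvPolynomial σ R) = 1 :=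
    coeffMatrix_eq_of_sum_smul fun α ↦ by simp [Matrix.one_apply, ite_smul]
  rw [coeffDet, hone, Matrix.det_one]

variable [Fact p.Prime] [CharP R p]

lemma coeffDet_bind₁ (F G : σ → MvPolynomial σ R) :
    coeffDet p (fun i ↦ bind₁ G (F i)) = pthPowerBind p G (coeffDet p F) * coeffDet p G := by
  rw [coeffDet, coeffMatrix_bind₁, Matrix.det_mul, ← AlgHom.mapMatrix_apply, ← AlgHom.map_det]
  rfl

end CoeffDet

section Linear

open Matrix

variable {σ R : Type*} [Fintype σ] [DecidableEq σ] [CommRing R] {p : ℕ}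

lemma transvection_pow {i j : σ} (hij : i ≠ j) (c : R) (m : ℕ) :
    transvection i j c ^ m = transvection i j (m * c) := by
  induction m with
  | zero => simp
  | succ m ih =>
    rw [pow_succ, ih, transvection_mul_transvection_same i j hij, Nat.cast_succ, add_one_mul]

lemma coeffDet_diagonal [NeZero p] (D : σ → R) :
    coeffDet p (diagonal D).toMvPolynomial
      = algebraMap R _ ((diagonal D).det ^ (p ^ Fintype.card σ * (p - 1) / 2)) := by
  have hform : (diagonal D).toMvPolynomial = fun i ↦ C (D i) * X i := by
    ext1 i
    simp [toMvPolynomial, diagonal_apply, apply_ite (monomial _), C_mul_X_eq_monomial]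
  have hdiag : coeffMatrix p (diagonal D).toMvPolynomial
      = diagonal fun α ↦ algebraMap R _ (multiPow D α) :=
    coeffMatrix_eq_of_sum_smul fun α ↦ by
      simp only [hform, multiPow_mul, ← map_multiPow, diagonal_apply, ite_smul, zero_smul,
        Finset.sum_ite_eq, Finset.mem_univ, if_true, algebraMap_smul, smul_eq_C_mul]
  rw [coeffDet, hdiag, det_diagonal, det_diagonal, ← map_prod, prod_multiPow]

variable [Fact p.Prime] [CharP R p]

lemma coeffDet_toMvPolynomial_mul (A B : Matrix σ σ R) :
    coeffDet p (A * B).toMvPolynomial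
      = pthPowerBind p B.toMvPolynomial (coeffDet p A.toMvPolynomial)
        * coeffDet p B.toMvPolynomial := by
  rw [← coeffDet_bind₁, funext (toMvPolynomial_mul A B)]

lemma coeffDet_toMvPolynomial_mul_of_eq_algebraMap {A : Matrix σ σ R} {c : R}
    (hA : coeffDet p A.toMvPolynomial = algebraMap R _ c) (B : Matrix σ σ R) :
    coeffDet p (A * B).toMvPolynomial
      = coeffDet p A.toMvPolynomial * coeffDet p B.toMvPolynomial := by
  rw [coeffDet_toMvPolynomial_mul, hA, AlgHom.commutes]

lemma isUnit_coeffDet_toMvPolynomial {A : Matrix σ σ R} (hA : IsUnit A) :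
    IsUnit (coeffDet p A.toMvPolynomial) := by
  obtain ⟨B, hBA⟩ := hA.exists_left_inv
  refine .of_mul_eq_one_right (pthPowerBind p A.toMvPolynomial (coeffDet p B.toMvPolynomial)) ?_
  rw [← coeffDet_toMvPolynomial_mul, hBA, toMvPolynomial_one, coeffDet_X]

variable [IsReduced R]

lemma exists_coeffDet_toMvPolynomial_eq_algebraMap {A : Matrix σ σ R} (hA : IsUnit A) :
    ∃ c : R, coeffDet p A.toMvPolynomial = algebraMap R _ c := by
  obtain ⟨c, -, hc⟩ := isUnit_iff_eq_C_of_isReduced.mp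
    ((isUnit_coeffDet_toMvPolynomial (p := p) hA).map (pthPowerSubalgebra σ R p).val)
  exact ⟨c, Subtype.ext hc⟩

lemma coeffDet_toMvPolynomial_pow {A : Matrix σ σ R} (hA : IsUnit A) (m : ℕ) :
    coeffDet p (A ^ m).toMvPolynomial = coeffDet p A.toMvPolynomial ^ m := by
  obtain ⟨c, hc⟩ := exists_coeffDet_toMvPolynomial_eq_algebraMap (p := p) hA
  induction m with
  | zero => rw [pow_zero, pow_zero, toMvPolynomial_one, coeffDet_X]
  | succ m ih => rw [pow_succ', pow_succ', coeffDet_toMvPolynomial_mul_of_eq_algebraMap hc, ih]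

lemma coeffDet_toMvPolynomial_eq_one_of_pow_eq_one {A : Matrix σ σ R} (hA : A ^ p = 1) :
    coeffDet p A.toMvPolynomial = 1 := by
  have hunit : IsUnit A := .of_pow_eq_one hA (NeZero.ne p)
  have hpow : coeffDet p A.toMvPolynomial ^ p = 1 := by
    rw [← coeffDet_toMvPolynomial_pow hunit, hA, toMvPolynomial_one, coeffDet_X]
  refine Subtype.ext (frobenius_inj (MvPolynomial σ R) p ?_)
  simpa [frobenius_def] using congrArg Subtype.val hpow

lemma coeffDet_transvection {i j : σ} (hij : i ≠ j) (c : R) :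
    coeffDet p (transvection i j c).toMvPolynomial = 1 :=
  coeffDet_toMvPolynomial_eq_one_of_pow_eq_one (by simp [transvection_pow hij])

theorem coeffDet_toMvPolynomial {k : Type*} [Field k] [CharP k p] (A : Matrix σ σ k) :
    coeffDet p A.toMvPolynomial
      = algebraMap k _ (A.det ^ (p ^ Fintype.card σ * (p - 1) / 2)) := by
  induction A using diagonal_transvection_induction with
  | hdiag D _ => exact coeffDet_diagonal D
  | htransvec t =>
    rw [TransvectionStruct.toMatrix, coeffDet_transvection t.hij, det_transvection_of_ne _ _ t.hij,
      one_pow, map_one]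
  | hmul A B hA hB =>
    rw [coeffDet_toMvPolynomial_mul_of_eq_algebraMap hA, hA, hB, det_mul, mul_pow, map_mul]

end Linear

theorem stmt6 {k : Type*} [Field k] (p : ℕ) (hp : p.Prime) [CharP k p] (n : ℕ)
    (A : Matrix (Fin n) (Fin n) k)
    (F : Fin n → MvPolynomial (Fin n) k)
    (hF : ∀ i : Fin n, F i = ∑ j : Fin n, C (A i j) * X j)
    (UF : Matrix (Fin n → Fin p) (Fin n → Fin p) (MvPolynomial (Fin n) k))
    (hUFmem : ∀ α β, UF α β ∈
      Algebra.adjoin k (Set.range fun i : Fin n => (X i : MvPolynomial (Fin n) k) ^ p))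
    (hUF : ∀ α : Fin n → Fin p,
      ∏ i : Fin n, F i ^ (α i : ℕ) = ∑ β : Fin n → Fin p, UF α β * ∏ i : Fin n, X i ^ (β i : ℕ)) :
    UF.det = C A.det ^ (p ^ n * (p - 1) / 2) := by
  have : Fact p.Prime := ⟨hp⟩
  have hlinear : F = A.toMvPolynomial := by
    ext1 i
    simp only [hF, Matrix.toMvPolynomial, C_mul_X_eq_monomial]
  let U : Matrix (Fin n → Fin p) (Fin n → Fin p) (pthPowerSubalgebra (Fin n) k p) :=
    .of fun α β ↦ ⟨UF α β, hUFmem α β⟩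
  have hU : coeffMatrix p A.toMvPolynomial = U :=
    coeffMatrix_eq_of_sum_smul fun α ↦ (hlinear ▸ hUF α).symm
  calc UF.det = (coeffDet p A.toMvPolynomial : MvPolynomial (Fin n) k) := by
        rw [coeffDet, hU]
        exact (AlgHom.map_det (pthPowerSubalgebra (Fin n) k p).val U).symm
    _ = C A.det ^ (p ^ n * (p - 1) / 2) := by
        rw [coeffDet_toMvPolynomial, Fintype.card_fin, map_pow]
        rfl
end

section
/- Let k be a field of characteristic p > 0 and F ∈ k[X]^n. Then Δ(F) = j(F)^q, where j(F) = det(∂fᵢ/∂xⱼ) is the Jacobian of F and q = p^n(p−1)/2. -/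
open MvPolynomial

/-!
Expand `F` around the generic point: the `f_i(X + Y)` are polynomials in `Y` over `R = k[X]`, and
their linear parts form the Jacobian matrix of `F`. Modulo the ideal `(Y_i ^ p)` the entries of
`U(F)`, being polynomials in the `X_i ^ p`, are unchanged by `X ↦ X + Y`. Hence `U(F)`, times the
matrix of the translation `Y ↦ X + Y`, is the matrix of the coefficients of the `F(X + Y)^α` at the
`Y^β` with `α, β ∈ [0, p - 1]^n`.

For any tuple `G` over `R` the determinant of this coefficient matrix does not change when every
`G_i` is replaced by its initial form with respect to weights on the variables, as long as that
form has the weight of the `i`-th variable. Weights `-1` show that translations have determinant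
one, and weights `1` reduce `G` without constant terms to its linear part. On linear substitutions
the determinant is multiplicative, since `(Y_i ^ p)` is stable under them in characteristic `p`. It
is therefore determined by diagonal matrices and transvections.
-/

section InitialForm

theorem det_eq_of_blockTriangular {R ι α : Type*} [CommRing R] [Fintype ι] [DecidableEq ι]
    [LinearOrder α] {b : ι → α} {A B : Matrix ι ι R} (hA : A.BlockTriangular b)
    (hB : B.BlockTriangular b) (h : ∀ i j, b i = b j → A i j = B i j) : A.det = B.det := by
  rw [hA.det, hB.det]
  refine Finset.prod_congr rfl fun a _ => congrArg Matrix.det ?_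
  ext i j
  exact h _ _ (i.2.trans j.2.symm)

variable {R σ M : Type*} [CommSemiring R] [AddCommMonoid M] [LinearOrder M]

/-- `g` is the initial form of `f` in weight `d`: it is homogeneous of weight `d`, and `f - g` has
only monomials of larger weight. Note that `g = 0` is allowed. -/
structure IsInitialForm (w : σ → M) (d : M) (f g : MvPolynomial σ R) : Prop where
  isWeightedHomogeneous : IsWeightedHomogeneous w g d
  coeff_eq : ∀ m, Finsupp.weight w m ≤ d → coeff m f = coeff m g

namespace IsInitialForm

variable {w : σ → M} {d e : M} {f f' g g' : MvPolynomial σ R}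

theorem refl (hf : IsWeightedHomogeneous w f d) : IsInitialForm w d f f :=
  ⟨hf, fun _ _ => rfl⟩

theorem add_of_lt (hg : IsWeightedHomogeneous w g d) (hf : IsWeightedHomogeneous w f e)
    (hde : d < e) : IsInitialForm w d (g + f) g where
  isWeightedHomogeneous := hg
  coeff_eq m hm := by rw [coeff_add, hf.coeff_eq_zero m (hm.trans_lt hde).ne, add_zero]

theorem coeff_eq_zero_of_lt (h : IsInitialForm w d f g) {m : σ →₀ ℕ}
    (hm : Finsupp.weight w m < d) : coeff m f = 0 := by
  rw [h.coeff_eq m hm.le, h.isWeightedHomogeneous.coeff_eq_zero m hm.ne]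

variable [IsOrderedCancelAddMonoid M]

theorem mul (h : IsInitialForm w d f g) (h' : IsInitialForm w e f' g') :
    IsInitialForm w (d + e) (f * f') (g * g') where
  isWeightedHomogeneous := h.isWeightedHomogeneous.mul h'.isWeightedHomogeneous
  coeff_eq m hm := by
    classical
    rw [coeff_mul, coeff_mul]
    refine Finset.sum_congr rfl fun ⟨a, b⟩ hab => ?_
    rw [← Finset.HasAntidiagonal.mem_antidiagonal.1 hab, map_add] at hm
    rcases lt_or_ge d (Finsupp.weight w a) with ha | ha
    · have hb : Finsupp.weight w b < e :=
        lt_of_not_ge fun hb => hm.not_gt (add_lt_add_of_lt_of_le ha hb)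
      simp only [h'.coeff_eq_zero_of_lt hb, h'.isWeightedHomogeneous.coeff_eq_zero b hb.ne,
        mul_zero]
    rcases lt_or_ge e (Finsupp.weight w b) with hb | hb
    · have ha : Finsupp.weight w a < d :=
        lt_of_not_ge fun ha => hm.not_gt (add_lt_add_of_le_of_lt ha hb)
      simp only [h.coeff_eq_zero_of_lt ha, h.isWeightedHomogeneous.coeff_eq_zero a ha.ne,
        zero_mul]
    · rw [h.coeff_eq a ha, h'.coeff_eq b hb]

theorem pow (h : IsInitialForm w d f g) (n : ℕ) : IsInitialForm w (n • d) (f ^ n) (g ^ n) := by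
  induction n with
  | zero => simpa only [pow_zero, zero_nsmul] using refl (isWeightedHomogeneous_one R w)
  | succ n ih => simpa only [pow_succ, succ_nsmul] using ih.mul h

theorem prod {ι : Type*} (s : Finset ι) {d : ι → M} {f g : ι → MvPolynomial σ R}
    (h : ∀ i ∈ s, IsInitialForm w (d i) (f i) (g i)) :
    IsInitialForm w (∑ i ∈ s, d i) (∏ i ∈ s, f i) (∏ i ∈ s, g i) := by
  classical
  induction s using Finset.induction_on with
  | empty => exact refl (isWeightedHomogeneous_one R w)
  | insert a s ha ih =>
    rw [Finset.sum_insert ha, Finset.prod_insert ha, Finset.prod_insert ha]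
    exact (h a (s.mem_insert_self a)).mul (ih fun i hi => h i (Finset.mem_insert_of_mem hi))

end IsInitialForm

end InitialForm

section TruncatedCoefficients

/-- The multiindex `β ∈ [0, p - 1]^σ` as the exponent of a monomial. -/
noncomputable def boxExponent {σ : Type*} [Finite σ] {p : ℕ} (β : σ → Fin p) : σ →₀ ℕ :=
  Finsupp.equivFunOnFinite.symm fun i => (β i : ℕ)

/-- The ideal generated by the `p`-th powers of the variables. -/
noncomputable def powVarsIdeal (σ R : Type*) [CommSemiring R] (p : ℕ) :
    Ideal (MvPolynomial σ R) :=
  Ideal.span (Set.range fun i => X i ^ p)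

/-- The matrix of the coefficients at the monomials `X ^ β` of the products `G ^ α`, where
`α ∈ [0, p - 1]^τ` and `β ∈ [0, p - 1]^σ`. -/
noncomputable def truncCoeffMatrix {σ τ R : Type*} [Finite σ] [Fintype τ] [CommSemiring R] (p : ℕ)
    (G : τ → MvPolynomial σ R) : Matrix (τ → Fin p) (σ → Fin p) R :=
  Matrix.of fun α β => coeff (boxExponent β) (∏ i, G i ^ (α i : ℕ))

theorem boxExponent_injective {σ : Type*} [Finite σ] {p : ℕ} :
    Function.Injective (boxExponent : (σ → Fin p) → σ →₀ ℕ) := fun _ _ h =>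
  funext fun i => Fin.ext (DFunLike.congr_fun h i)

section CommSemiring

variable {σ τ R S : Type*} [CommSemiring R] [CommSemiring S] {p : ℕ}

theorem prod_X_pow_eq_monomial_boxExponent [Fintype σ] (β : σ → Fin p) :
    ∏ i, (X i : MvPolynomial σ R) ^ (β i : ℕ) = monomial (boxExponent β) 1 := by
  rw [monomial_eq, C_1, one_mul, Finsupp.prod_fintype _ _ fun i => pow_zero _]
  rfl

theorem weight_boxExponent [Fintype σ] {M : Type*} [AddCommMonoid M] (w : σ → M) (β : σ → Fin p) :
    Finsupp.weight w (boxExponent β) = ∑ i, (β i : ℕ) • w i :=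
  Finsupp.weight_eq_sum w _

theorem X_pow_mem_powVarsIdeal (i : σ) : (X i : MvPolynomial σ R) ^ p ∈ powVarsIdeal σ R p :=
  Ideal.subset_span ⟨i, rfl⟩

theorem mem_powVarsIdeal_iff [Finite σ] {f : MvPolynomial σ R} :
    f ∈ powVarsIdeal σ R p ↔ ∀ β : σ → Fin p, coeff (boxExponent β) f = 0 := by
  have hgen : (Set.range fun i : σ => (X i : MvPolynomial σ R) ^ p) =
      (fun s => monomial s 1) '' Set.range fun i => Finsupp.single i p := by
    rw [← Set.range_comp]
    exact congrArg Set.range (funext fun i => X_pow_eq_monomial)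
  rw [powVarsIdeal, hgen, mem_ideal_span_monomial_image]
  simp only [mem_support_iff, Set.exists_range_iff, Finsupp.single_le_iff]
  constructor
  · intro h β
    by_contra hβ
    obtain ⟨i, hi⟩ := h _ hβ
    exact hi.not_gt (β i).isLt
  · intro h m hm
    by_contra! hlt
    have hbox : boxExponent (fun i => ⟨m i, hlt i⟩) = m := Finsupp.ext fun i => rfl
    exact hm (hbox ▸ h _)

theorem truncCoeffMatrix_map [Finite σ] [Fintype τ] (φ : R →+* S) (G : τ → MvPolynomial σ R) :
    truncCoeffMatrix p (fun i => map φ (G i)) = (truncCoeffMatrix p G).map φ := by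
  ext α β
  simp only [truncCoeffMatrix, Matrix.of_apply, Matrix.map_apply, ← coeff_map, map_prod, map_pow]

theorem truncCoeffMatrix_C_mul_X [Fintype σ] (d : σ → R) :
    truncCoeffMatrix p (fun i => C (d i) * X i) =
      Matrix.diagonal fun α : σ → Fin p => ∏ i, d i ^ (α i : ℕ) := by
  classical
  ext α β
  simp only [truncCoeffMatrix, Matrix.of_apply, mul_pow, Finset.prod_mul_distrib,
    prod_X_pow_eq_monomial_boxExponent, ← map_pow, ← map_prod, coeff_C_mul, coeff_monomial,
    boxExponent_injective.eq_iff, Matrix.diagonal_apply, mul_ite, mul_one, mul_zero]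

theorem truncCoeffMatrix_X [Fintype σ] :
    truncCoeffMatrix p (X : σ → MvPolynomial σ R) = 1 := by
  simpa using truncCoeffMatrix_C_mul_X (p := p) (1 : σ → R)

end CommSemiring

variable {ρ σ τ R : Type*} [CommRing R] {p : ℕ}

theorem truncCoeffMatrix_eq_mul [Fintype ρ] [Finite σ] [Fintype τ] [DecidableEq τ]
    {H : ρ → MvPolynomial σ R} {G : τ → MvPolynomial σ R} {A : Matrix (ρ → Fin p) (τ → Fin p) R}
    (h : ∀ α : ρ → Fin p, ∏ i, H i ^ (α i : ℕ) - ∑ β, C (A α β) * ∏ i, G i ^ (β i : ℕ) ∈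
      powVarsIdeal σ R p) :
    truncCoeffMatrix p H = A * truncCoeffMatrix p G := by
  ext α γ
  have hα := mem_powVarsIdeal_iff.1 (h α) γ
  simp only [coeff_sub, coeff_sum, coeff_C_mul, sub_eq_zero] at hα
  exact hα

variable [Fintype σ] [DecidableEq σ]

theorem sub_sum_coeff_mul_prod_X_mem_powVarsIdeal (f : MvPolynomial σ R) :
    f - ∑ β : σ → Fin p, C (coeff (boxExponent β) f) * ∏ i, X i ^ (β i : ℕ) ∈
      powVarsIdeal σ R p := by
  rw [mem_powVarsIdeal_iff]
  intro γ
  simp [prod_X_pow_eq_monomial_boxExponent, coeff_sum, coeff_C_mul, coeff_monomial,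
    boxExponent_injective.eq_iff]

theorem det_truncCoeffMatrix_eq_of_isInitialForm {M : Type*} [AddCommMonoid M]
    [LinearOrder M] [IsOrderedCancelAddMonoid M] (w : σ → M) {G H : σ → MvPolynomial σ R}
    (h : ∀ i, IsInitialForm w (w i) (G i) (H i)) :
    (truncCoeffMatrix p G).det = (truncCoeffMatrix p H).det := by
  have hprod (α : σ → Fin p) : IsInitialForm w (Finsupp.weight w (boxExponent α))
      (∏ i, G i ^ (α i : ℕ)) (∏ i, H i ^ (α i : ℕ)) := by
    rw [weight_boxExponent]
    exact .prod _ fun i _ => (h i).pow _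
  refine det_eq_of_blockTriangular (b := fun α => Finsupp.weight w (boxExponent α)) ?_ ?_ ?_
  · exact fun α β hlt => (hprod α).coeff_eq_zero_of_lt hlt
  · exact fun α β hlt => (hprod α).isWeightedHomogeneous.coeff_eq_zero _ hlt.ne
  · exact fun α β heq => (hprod α).coeff_eq _ heq.ge

theorem det_truncCoeffMatrix_X_add_C (c : σ → R) :
    (truncCoeffMatrix p fun i => X i + C (c i)).det = 1 := by
  rw [det_truncCoeffMatrix_eq_of_isInitialForm (H := X) (fun _ => (-1 : ℤ)), truncCoeffMatrix_X,
    Matrix.det_one]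
  exact fun i => .add_of_lt (isWeightedHomogeneous_X R _ i) (isWeightedHomogeneous_C _ (c i))
    neg_one_lt_zero

theorem sum_val_apply_eq (i : σ) :
    ∑ α : σ → Fin p, (α i : ℕ) = p ^ Fintype.card σ * (p - 1) / 2 := by
  have hrev : ∑ α : σ → Fin p, ((α i).rev : ℕ) = ∑ α : σ → Fin p, (α i : ℕ) :=
    (Equiv.piCongrRight fun _ => Fin.revPerm).sum_comp fun α : σ → Fin p => (α i : ℕ)
  have hpair : ∑ α : σ → Fin p, ((α i : ℕ) + (α i).rev) = p ^ Fintype.card σ * (p - 1) := by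
    rw [Finset.sum_congr rfl (g := fun _ => p - 1) fun α _ => by rw [Fin.val_rev]; omega]
    simp
  rw [Finset.sum_add_distrib, hrev] at hpair
  omega

theorem det_truncCoeffMatrix_C_mul_X (d : σ → R) :
    (truncCoeffMatrix p fun i => C (d i) * X i).det =
      (∏ i, d i) ^ (p ^ Fintype.card σ * (p - 1) / 2) := by
  rw [truncCoeffMatrix_C_mul_X, Matrix.det_diagonal, Finset.prod_comm, ← Finset.prod_pow]
  exact Finset.prod_congr rfl fun i _ => by rw [Finset.prod_pow_eq_pow_sum, sum_val_apply_eq]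

end TruncatedCoefficients

section Substitution

variable {p : ℕ} [Fact p.Prime]

theorem pow_mem_powVarsIdeal {σ R : Type*} [CommSemiring R] [CharP R p]
    {f : MvPolynomial σ R} (hf : constantCoeff f = 0) :
    f ^ p ∈ powVarsIdeal σ R p := by
  have hle : idealOfVars σ R ≤ (powVarsIdeal σ R p).comap (frobenius _ p) :=
    Ideal.span_le.2 (Set.range_subset_iff.2 X_pow_mem_powVarsIdeal)
  refine hle ?_
  rw [← pow_one (idealOfVars σ R), mem_pow_idealOfVars_iff']
  intro m hm
  rwa [(Finsupp.degree_eq_zero_iff m).1 (Nat.lt_one_iff.1 hm)]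

variable {ρ σ τ R : Type*} [CommRing R] [CharP R p]

theorem truncCoeffMatrix_bind₁ [Fintype ρ] [Finite σ] [Fintype τ] [DecidableEq τ]
    (H : ρ → MvPolynomial τ R) {G : τ → MvPolynomial σ R} (hG : ∀ i, constantCoeff (G i) = 0) :
    truncCoeffMatrix p (fun i => bind₁ G (H i)) = truncCoeffMatrix p H * truncCoeffMatrix p G := by
  have hle : powVarsIdeal τ R p ≤ (powVarsIdeal σ R p).comap (bind₁ G) := by
    refine Ideal.span_le.2 (Set.range_subset_iff.2 fun i => ?_)
    simpa using pow_mem_powVarsIdeal (hG i)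
  refine truncCoeffMatrix_eq_mul fun α => ?_
  simpa [truncCoeffMatrix] using
    hle (sub_sum_coeff_mul_prod_X_mem_powVarsIdeal (p := p) (∏ i, H i ^ (α i : ℕ)))

theorem det_truncCoeffMatrix_add_C [Fintype σ] [DecidableEq σ] {G : σ → MvPolynomial σ R}
    (hG : ∀ i, constantCoeff (G i) = 0) (c : σ → R) :
    (truncCoeffMatrix p fun i => G i + C (c i)).det = (truncCoeffMatrix p G).det := by
  have h := truncCoeffMatrix_bind₁ (p := p) (fun i => X i + C (c i)) hG
  simp only [map_add, bind₁_X_right, bind₁_C_right] at h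
  rw [h, Matrix.det_mul, det_truncCoeffMatrix_X_add_C, one_mul]

end Substitution

section LinearPart

section CommSemiring

variable {σ τ R : Type*} [CommSemiring R]

/-- The matrix of the linear parts of the polynomials `G i`. -/
noncomputable def linearPart (G : τ → MvPolynomial σ R) : Matrix τ σ R :=
  Matrix.of fun i j => coeff (Finsupp.single j 1) (G i)

variable [Fintype σ]

theorem coeff_single_toMvPolynomial (A : Matrix τ σ R) (i : τ) (j : σ) :
    coeff (Finsupp.single j 1) (A.toMvPolynomial i) = A i j := by
  classical
  simp [Matrix.toMvPolynomial, coeff_sum, coeff_monomial, Finsupp.single_left_inj]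

theorem isInitialForm_toMvPolynomial_linearPart {G : τ → MvPolynomial σ R} (i : τ)
    (hG : constantCoeff (G i) = 0) :
    IsInitialForm (1 : σ → ℕ) 1 (G i) ((linearPart G).toMvPolynomial i) where
  isWeightedHomogeneous := (linearPart G).toMvPolynomial_isHomogeneous i
  coeff_eq m hm := by
    replace hm : m.degree ≤ 1 := by rwa [Finsupp.degree_eq_weight_one]
    rcases Nat.le_one_iff_eq_zero_or_eq_one.1 hm with h | h
    · rw [(Finsupp.degree_eq_zero_iff m).1 h]
      exact hG.trans ((linearPart G).toMvPolynomial_constantCoeff i).symm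
    · obtain ⟨j, rfl⟩ := Finsupp.range_single_one.ge h
      exact (coeff_single_toMvPolynomial (linearPart G) i j).symm

theorem toMvPolynomial_diagonal [DecidableEq σ] (d : σ → R) (i : σ) :
    (Matrix.diagonal d).toMvPolynomial i = C (d i) * X i := by
  rw [Matrix.toMvPolynomial, Finset.sum_eq_single i, Matrix.diagonal_apply_eq, C_mul_X_eq_monomial]
  · exact fun j _ hj => by rw [Matrix.diagonal_apply_ne' d hj, monomial_zero]
  · exact fun hi => absurd (Finset.mem_univ i) hi

end CommSemiring

variable {σ R : Type*} [CommRing R] [Fintype σ] [DecidableEq σ] {p : ℕ}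

theorem toMvPolynomial_transvection (i j : σ) (c : R) (l : σ) :
    (Matrix.transvection i j c).toMvPolynomial l = X l + if l = i then C c * X j else 0 := by
  rw [Matrix.transvection, Matrix.toMvPolynomial_add, Matrix.toMvPolynomial_one, Pi.add_apply]
  congr 1
  rw [Matrix.toMvPolynomial, Finset.sum_eq_single j]
  · split_ifs with h
    · rw [h, Matrix.single_apply_same, C_mul_X_eq_monomial]
    · rw [Matrix.single_apply_of_row_ne (Ne.symm h), monomial_zero]
  · exact fun m _ hm => by rw [Matrix.single_apply_of_col_ne _ _ hm.symm, monomial_zero]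
  · exact fun hj => absurd (Finset.mem_univ j) hj

theorem det_truncCoeffMatrix_transvection {i j : σ} (hij : i ≠ j) (c : R) :
    (truncCoeffMatrix p (Matrix.transvection i j c).toMvPolynomial).det = 1 := by
  rw [det_truncCoeffMatrix_eq_of_isInitialForm (H := X) (Pi.single i (-1 : ℤ)), truncCoeffMatrix_X,
    Matrix.det_one]
  intro l
  have hX (m : σ) : IsWeightedHomogeneous (Pi.single i (-1 : ℤ)) (X m : MvPolynomial σ R) _ :=
    isWeightedHomogeneous_X R _ m
  rw [toMvPolynomial_transvection]
  split_ifs with hl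
  · refine .add_of_lt (hX l) ((hX j).C_mul c) ?_
    rw [hl, Pi.single_eq_same, Pi.single_eq_of_ne hij.symm]
    exact neg_one_lt_zero
  · rw [add_zero]
    exact .refl (hX l)

theorem map_det_truncCoeffMatrix_toMvPolynomial {S : Type*} [CommRing S] (φ : R →+* S)
    (A : Matrix σ σ R) :
    φ (truncCoeffMatrix p A.toMvPolynomial).det =
      (truncCoeffMatrix p (A.map φ).toMvPolynomial).det := by
  rw [RingHom.map_det, RingHom.mapMatrix_apply, ← truncCoeffMatrix_map]
  simp only [← Matrix.toMvPolynomial_map]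

variable [Fact p.Prime]

theorem det_truncCoeffMatrix_toMvPolynomial_of_field {K : Type*} [Field K] [CharP K p]
    (A : Matrix σ σ K) :
    (truncCoeffMatrix p A.toMvPolynomial).det = A.det ^ (p ^ Fintype.card σ * (p - 1) / 2) := by
  induction A using Matrix.diagonal_transvection_induction with
  | hdiag d _ =>
    rw [funext (toMvPolynomial_diagonal d), det_truncCoeffMatrix_C_mul_X, Matrix.det_diagonal]
  | htransvec t =>
    rw [t.det, one_pow, Matrix.TransvectionStruct.toMatrix,
      det_truncCoeffMatrix_transvection t.hij]
  | hmul A B hA hB =>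
    rw [funext (Matrix.toMvPolynomial_mul A B),
      truncCoeffMatrix_bind₁ _ B.toMvPolynomial_constantCoeff, Matrix.det_mul, hA, hB,
      Matrix.det_mul, mul_pow]

variable [CharP R p]

theorem det_truncCoeffMatrix_toMvPolynomial (A : Matrix σ σ R) :
    (truncCoeffMatrix p A.toMvPolynomial).det = A.det ^ (p ^ Fintype.card σ * (p - 1) / 2) := by
  -- The generic matrix over `ZMod p` has entries in a domain, and specializes to every `A`.
  let 𝒳 : Matrix σ σ (MvPolynomial (σ × σ) (ZMod p)) := Matrix.mvPolynomialX σ σ (ZMod p)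
  have hgeneric : (truncCoeffMatrix p 𝒳.toMvPolynomial).det =
      𝒳.det ^ (p ^ Fintype.card σ * (p - 1) / 2) := by
    let φ := algebraMap (MvPolynomial (σ × σ) (ZMod p))
      (FractionRing (MvPolynomial (σ × σ) (ZMod p)))
    have hφ : Function.Injective φ := IsFractionRing.injective _ _
    have := charP_of_injective_algebraMap hφ p
    apply hφ
    rw [map_det_truncCoeffMatrix_toMvPolynomial, det_truncCoeffMatrix_toMvPolynomial_of_field,
      map_pow, RingHom.map_det, RingHom.mapMatrix_apply]
  let := ZMod.algebra R p
  let ψ : MvPolynomial (σ × σ) (ZMod p) →+* R :=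
    (aeval fun ij : σ × σ => A ij.1 ij.2 : MvPolynomial (σ × σ) (ZMod p) →ₐ[ZMod p] R)
  have hψ : 𝒳.map ψ = A := Matrix.mvPolynomialX_mapMatrix_aeval (ZMod p) A
  have h := congrArg ψ hgeneric
  rwa [map_det_truncCoeffMatrix_toMvPolynomial, map_pow, RingHom.map_det, RingHom.mapMatrix_apply,
    hψ] at h

theorem det_truncCoeffMatrix (G : σ → MvPolynomial σ R) :
    (truncCoeffMatrix p G).det = (linearPart G).det ^ (p ^ Fintype.card σ * (p - 1) / 2) := by
  let G₀ : σ → MvPolynomial σ R := fun i => G i - C (constantCoeff (G i))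
  have hG₀ (i : σ) : constantCoeff (G₀ i) = 0 := by simp [G₀]
  have hlin : linearPart G₀ = linearPart G := by
    ext i j
    simp [linearPart, G₀, coeff_C, eq_comm (a := (0 : σ →₀ ℕ))]
  calc (truncCoeffMatrix p G).det
      = (truncCoeffMatrix p fun i => G₀ i + C (constantCoeff (G i))).det := by simp [G₀]
    _ = (truncCoeffMatrix p G₀).det := det_truncCoeffMatrix_add_C hG₀ _
    _ = (truncCoeffMatrix p (linearPart G₀).toMvPolynomial).det :=
      det_truncCoeffMatrix_eq_of_isInitialForm 1 fun i =>
        isInitialForm_toMvPolynomial_linearPart i (hG₀ i)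
    _ = _ := by rw [det_truncCoeffMatrix_toMvPolynomial, hlin]

end LinearPart

section Taylor

section CommSemiring

variable {σ k : Type*} [CommSemiring k]

/-- The Taylor expansion `f(X) ↦ f(X + Y)` at the generic point. The target is the ring of
polynomials in `Y`, with the `X i` as constants. -/
noncomputable def mvTaylor : MvPolynomial σ k →ₐ[k] MvPolynomial σ (MvPolynomial σ k) :=
  aeval fun i => X i + C (X i)

theorem mvTaylor_X (i : σ) : mvTaylor (X i : MvPolynomial σ k) = X i + C (X i) :=
  aeval_X _ i

theorem mvTaylor_C (a : k) : mvTaylor (C a : MvPolynomial σ k) = C (C a) :=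
  aeval_C _ a

theorem constantCoeff_mvTaylor (f : MvPolynomial σ k) : constantCoeff (mvTaylor f) = f := by
  induction f using MvPolynomial.induction_on with
  | C a => rw [mvTaylor_C, constantCoeff_C]
  | add f g hf hg => rw [map_add, map_add, hf, hg]
  | mul_X f i hf => simp [hf, mvTaylor_X]

theorem coeff_single_mvTaylor (f : MvPolynomial σ k) (j : σ) :
    coeff (Finsupp.single j 1) (mvTaylor f) = pderiv j f := by
  classical
  induction f using MvPolynomial.induction_on with
  | C a => simp [coeff_C, eq_comm (a := (0 : σ →₀ ℕ))]
  | add f g hf hg => rw [map_add, coeff_add, hf, hg, map_add]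
  | mul_X f i hf =>
    rw [map_mul, mvTaylor_X, mul_add, coeff_add, mul_comm _ (C (X i)), coeff_C_mul, hf,
      coeff_mul_X', pderiv_mul, pderiv_X]
    rcases eq_or_ne i j with rfl | hij
    · have h₀ : coeff 0 (mvTaylor f) = f := constantCoeff_mvTaylor f
      simp [h₀, add_comm, mul_comm]
    · simp [hij, mul_comm]

end CommSemiring

variable {σ k : Type*} [CommRing k] {p : ℕ} [Fact p.Prime] [CharP k p]

theorem mvTaylor_sub_C_mem_powVarsIdeal {u : MvPolynomial σ k}
    (hu : u ∈ Algebra.adjoin k (Set.range fun i : σ => (X i : MvPolynomial σ k) ^ p)) :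
    mvTaylor u - C u ∈ powVarsIdeal σ (MvPolynomial σ k) p := by
  rw [← Ideal.Quotient.mk_eq_mk_iff_sub_mem]
  induction hu using Algebra.adjoin_induction with
  | mem u hu =>
    obtain ⟨i, rfl⟩ := hu
    rw [Ideal.Quotient.mk_eq_mk_iff_sub_mem, map_pow, mvTaylor_X, add_pow_char, C_pow,
      add_sub_cancel_right]
    exact X_pow_mem_powVarsIdeal i
  | algebraMap a => rw [algebraMap_eq, mvTaylor_C]
  | add u v _ _ hu hv => simp only [map_add, hu, hv]
  | mul u v _ _ hu hv => simp only [map_mul, hu, hv]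

theorem det_truncCoeffMatrix_mvTaylor [Fintype σ] [DecidableEq σ] {F : σ → MvPolynomial σ k}
    {U : Matrix (σ → Fin p) (σ → Fin p) (MvPolynomial σ k)}
    (hUmem : ∀ α β, U α β ∈
      Algebra.adjoin k (Set.range fun i : σ => (X i : MvPolynomial σ k) ^ p))
    (hU : ∀ α : σ → Fin p, ∏ i, F i ^ (α i : ℕ) = ∑ β, U α β * ∏ i, X i ^ (β i : ℕ)) :
    (truncCoeffMatrix p fun i => mvTaylor (F i)).det = U.det := by
  have hmul : truncCoeffMatrix p (fun i => mvTaylor (F i)) =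
      U * truncCoeffMatrix p fun i => X i + C (X i) := by
    refine truncCoeffMatrix_eq_mul fun α => ?_
    have hα := congrArg mvTaylor (hU α)
    simp only [map_prod, map_sum, map_mul, map_pow, mvTaylor_X] at hα
    simp only [hα, ← Finset.sum_sub_distrib, ← sub_mul]
    exact sum_mem fun β _ => Ideal.mul_mem_right _ _ (mvTaylor_sub_C_mem_powVarsIdeal (hUmem α β))
  rw [hmul, Matrix.det_mul, det_truncCoeffMatrix_X_add_C, mul_one]

end Taylor

theorem stmt9_general {σ k : Type*} [Fintype σ] [DecidableEq σ] [CommRing k] (p : ℕ)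
    (hp : p.Prime) [CharP k p] (F : σ → MvPolynomial σ k)
    (UF : Matrix (σ → Fin p) (σ → Fin p) (MvPolynomial σ k))
    (hUFmem : ∀ α β, UF α β ∈
      Algebra.adjoin k (Set.range fun i : σ => (X i : MvPolynomial σ k) ^ p))
    (hUF : ∀ α : σ → Fin p, ∏ i, F i ^ (α i : ℕ) = ∑ β, UF α β * ∏ i, X i ^ (β i : ℕ)) :
    UF.det = (Matrix.of fun i j => pderiv j (F i)).det ^ (p ^ Fintype.card σ * (p - 1) / 2) := by
  have : Fact p.Prime := ⟨hp⟩
  have hlin : linearPart (fun i => mvTaylor (F i)) = Matrix.of fun i j => pderiv j (F i) := by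
    ext1 i j
    exact coeff_single_mvTaylor (F i) j
  rw [← det_truncCoeffMatrix_mvTaylor hUFmem hUF, det_truncCoeffMatrix, hlin]

theorem stmt9 {k : Type*} [Field k] (p : ℕ) (hp : p.Prime) [CharP k p] (n : ℕ)
    (F : Fin n → MvPolynomial (Fin n) k)
    (UF : Matrix (Fin n → Fin p) (Fin n → Fin p) (MvPolynomial (Fin n) k))
    (hUFmem : ∀ α β, UF α β ∈
      Algebra.adjoin k (Set.range fun i : Fin n => (X i : MvPolynomial (Fin n) k) ^ p))
    (hUF : ∀ α : Fin n → Fin p,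
      ∏ i : Fin n, F i ^ (α i : ℕ) = ∑ β : Fin n → Fin p, UF α β * ∏ i : Fin n, X i ^ (β i : ℕ)) :
    UF.det = jac F ^ (p ^ n * (p - 1) / 2) := by
  simpa only [jac, Fintype.card_fin] using stmt9_general p hp F UF hUFmem hUF
end
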